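/- For every sign string S = (s_1,…,s_n), the complex dimension of the space of invariants Inv(W^S) = {x ∈ W^S : X·x = 0 for all X ∈ 𝔰𝔩₃(ℂ)} equals the number of dominant state strings for S. -/

import Mathlib

/-!
The proof computes, for every weight, the dimension of the space of extremal vectors of `W^S`, by
induction on `S`; invariants are the extremal vectors of weight `0`.

Since a path is read from its first step, whereas the induction peels off the first tensor factor,
it is convenient to count *lowest* weight vectors. Equivalently, `W^S` is twisted by the Chevalley
involution: the raising operators `e₁, e₂` are the actions of the matrix units `E₂₁, E₃₂`, and a
highest weight vector of weight `(a, b)` (`Chev.hw`) is a lowest weight vector of weight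
`(-a, -b)` for the original action.

* A highest weight vector of `W^s ⊗ V` is determined by its component `m` along one basis vector
  of `W^s`, and (up to exchanging the two simple roots, according to `s`) `m` can be any vector of
  weight `(a - 1, b)` with `e₁² m = 0` and `e₂ m = 0`; the remaining conditions follow from the
  Serre relations (`Chev.tensor_iff`, `finrank_hw_true`, `finrank_hw_false`).
* For `a, b ≥ 0` the space of such `m` is the direct sum of the highest weight spaces of weights
  `(a - 1, b)`, `(a + 1, b - 1)` and `(a, b + 1)`, embedded by explicit lowering operators
  (`Chev.assemble_bijective`). No complete reducibility is needed.
* By `𝔰𝔩₂`-theory there are no highest weight vectors of non-dominant weight (`Chev.hw_eq_bot`), and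
  a highest weight vector of weight `0` is killed by all of `𝔰𝔩₃` (`invSub_eq_hw`).

Hence the dimension of the highest weight space of weight `p` satisfies the recursion for the number
of paths with step string `S` that start at `p`, stay in the dominant chamber and end at the origin
(`hdim_eq_card`); the case `p = 0` is the theorem.
-/
noncomputable section

/-- The ground field `K = ℚ(v)`. -/
abbrev K : Type := RatFunc ℚ

/-- The indeterminate `v`. -/
def v : K := RatFunc.X

/-- The three states `-1, 0, 1`. -/
inductive St where
  | neg : St
  | zero : St
  | pos : St
deriving DecidableEq

instance : Fintype St where
  elems := {St.neg, St.zero, St.pos}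
  complete := fun x => by cases x <;> simp

/-- The integer value of a state. -/
def stval : St → ℤ
  | .neg => -1
  | .zero => 0
  | .pos => 1

/-- The order `-1 < 0 < 1` on states. -/
def stLt (a b : St) : Prop := stval a < stval b

/-- The weight `μ(s, j) ∈ ℤ²`; `true` is the sign `+`, `false` is `-`. -/
def wt : Bool → St → ℤ × ℤ
  | true, .pos => (1, 0)
  | true, .zero => (-1, 1)
  | true, .neg => (0, -1)
  | false, .pos => (0, 1)
  | false, .zero => (1, -1)
  | false, .neg => (-1, 0)

/-- Total weight `Σ μ(s_k, j_k)` of a sign string and a state string. -/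
def wtSum (S : List Bool) (J : List St) : ℤ × ℤ :=
  ((S.zip J).map fun p => wt p.1 p.2).sum

/-- A state string is dominant if its lattice path stays in the dominant
Weyl chamber and returns to the origin. -/
def Dominant (S : List Bool) (J : List St) : Prop :=
  J.length = S.length ∧
  (∀ k : ℕ, 0 ≤ (wtSum (S.take k) (J.take k)).1 ∧ 0 ≤ (wtSum (S.take k) (J.take k)).2) ∧
  wtSum S J = 0

/-- Coefficients of `b^{+-}(1) ∈ V⁺ ⊗ V⁻`. -/
def bCpm : St → St → K
  | .pos, .neg => 1
  | .zero, .zero => v⁻¹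
  | .neg, .pos => v⁻¹ ^ 2
  | _, _ => 0

/-- Coefficients of `b^{-+}(1) ∈ V⁻ ⊗ V⁺`. -/
def bCmp : St → St → K
  | .pos, .neg => 1
  | .zero, .zero => v⁻¹
  | .neg, .pos => v⁻¹ ^ 2
  | _, _ => 0

/-- Matrix entries of `σ_{+-} : V⁺ ⊗ V⁻ → K`. -/
def sCpm : St → St → K
  | .neg, .pos => 1
  | .zero, .zero => v
  | .pos, .neg => v ^ 2
  | _, _ => 0

/-- Matrix entries of `σ_{-+} : V⁻ ⊗ V⁺ → K`. -/
def sCmp : St → St → K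
  | .neg, .pos => 1
  | .zero, .zero => v
  | .pos, .neg => v ^ 2
  | _, _ => 0

/-- `tYpp a b c` is the coefficient of `e_a ⊗ e_b` in `t^{++}_-(e_c)`. -/
def tYpp : St → St → St → K
  | .pos, .zero, .pos => 1
  | .zero, .pos, .pos => v⁻¹
  | .pos, .neg, .zero => 1
  | .neg, .pos, .zero => v⁻¹
  | .zero, .neg, .neg => 1
  | .neg, .zero, .neg => v⁻¹
  | _, _, _ => 0

/-- `tYmm a b c` is the coefficient of `e_a ⊗ e_b` in `t^{--}_+(e_c)`. -/
def tYmm : St → St → St → K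
  | .pos, .zero, .pos => 1
  | .zero, .pos, .pos => v⁻¹
  | .pos, .neg, .zero => 1
  | .neg, .pos, .zero => v⁻¹
  | .zero, .neg, .neg => 1
  | .neg, .zero, .neg => v⁻¹
  | _, _, _ => 0

/-- `tLpp a b c` is the coefficient of `e_c` in `t^-_{++}(e_a ⊗ e_b)`. -/
def tLpp : St → St → St → K
  | .pos, .zero, .pos => v
  | .zero, .pos, .pos => 1
  | .pos, .neg, .zero => v
  | .neg, .pos, .zero => 1
  | .zero, .neg, .neg => v
  | .neg, .zero, .neg => 1
  | _, _, _ => 0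

/-- `tLmm a b c` is the coefficient of `e_c` in `t^+_{--}(e_a ⊗ e_b)`. -/
def tLmm : St → St → St → K
  | .pos, .zero, .pos => v
  | .zero, .pos, .pos => 1
  | .pos, .neg, .zero => v
  | .neg, .pos, .zero => 1
  | .zero, .neg, .neg => v
  | .neg, .zero, .neg => 1
  | _, _, _ => 0

/-- Matrix entries of the H-map
`(id_{V⁺} ⊗ t^-_{++}) ∘ (t^{++}_- ⊗ id_{V⁺}) : V⁻ ⊗ V⁺ → V⁺ ⊗ V⁻`:
`HCpm a b c d` is the coefficient of `e_a ⊗ e_b` in the image of `e_c ⊗ e_d`. -/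
def HCpm (a b c d : St) : K := ∑ y : St, tYpp a y c * tLpp y d b

/-- Matrix entries of the H-map
`(t^-_{++} ⊗ id_{V⁺}) ∘ (id_{V⁺} ⊗ t^{++}_-) : V⁺ ⊗ V⁻ → V⁻ ⊗ V⁺`:
`HCmp a b c d` is the coefficient of `e_a ⊗ e_b` in the image of `e_c ⊗ e_d`. -/
def HCmp (a b c d : St) : K := ∑ x : St, tLpp c x a * tYpp x b d

/-- State patterns of the three H-rules: `(j_k, j_{k+1})` on top, the
replacement below. -/
inductive HPat : St → St → St → St → Prop where
  | h1 : HPat .pos .zero .zero .pos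
  | h2 : HPat .zero .zero .neg .pos
  | h3 : HPat .zero .neg .neg .zero

/-- State patterns of the three Y-rules. -/
inductive YPat : St → St → St → Prop where
  | y1 : YPat .pos .zero .pos
  | y2 : YPat .pos .neg .zero
  | y3 : YPat .zero .neg .neg

/-- One application of a growth rule, rewriting `(S, J)` to `(S', J')`. -/
inductive Step : List Bool → List St → List Bool → List St → Prop where
  | hstep (A B : List Bool) (P Q : List St) (s1 s2 : Bool) (j1 j2 j1' j2' : St)
      (hl : A.length = P.length) (hs : s1 ≠ s2) (hp : HPat j1 j2 j1' j2') :
      Step (A ++ s1 :: s2 :: B) (P ++ j1 :: j2 :: Q)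
        (A ++ (!s1) :: (!s2) :: B) (P ++ j1' :: j2' :: Q)
  | ustep (A B : List Bool) (P Q : List St) (s1 s2 : Bool)
      (hl : A.length = P.length) (hs : s1 ≠ s2) :
      Step (A ++ s1 :: s2 :: B) (P ++ St.pos :: St.neg :: Q) (A ++ B) (P ++ Q)
  | ystep (A B : List Bool) (P Q : List St) (s : Bool) (j1 j2 j' : St)
      (hl : A.length = P.length) (hp : YPat j1 j2 j') :
      Step (A ++ s :: s :: B) (P ++ j1 :: j2 :: Q) (A ++ (!s) :: B) (P ++ j' :: Q)

/-- A complete execution of the growth algorithm from `(S, J)` down to the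
pair of empty strings. -/
inductive Exec : List Bool → List St → Type where
  | nil : Exec [] []
  | hstep (A B : List Bool) (P Q : List St) (s1 s2 : Bool) (j1 j2 j1' j2' : St)
      (hl : A.length = P.length) (hs : s1 ≠ s2) (hp : HPat j1 j2 j1' j2')
      (e : Exec (A ++ (!s1) :: (!s2) :: B) (P ++ j1' :: j2' :: Q)) :
      Exec (A ++ s1 :: s2 :: B) (P ++ j1 :: j2 :: Q)
  | ustep (A B : List Bool) (P Q : List St) (s1 s2 : Bool)
      (hl : A.length = P.length) (hs : s1 ≠ s2)
      (e : Exec (A ++ B) (P ++ Q)) :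
      Exec (A ++ s1 :: s2 :: B) (P ++ St.pos :: St.neg :: Q)
  | ystep (A B : List Bool) (P Q : List St) (s : Bool) (j1 j2 j' : St)
      (hl : A.length = P.length) (hp : YPat j1 j2 j')
      (e : Exec (A ++ (!s) :: B) (P ++ j' :: Q)) :
      Exec (A ++ s :: s :: B) (P ++ j1 :: j2 :: Q)

/-- The web tensor of an execution, as coordinates with respect to the basis
`e^S_J` of `V^S`: `web e L` is the coefficient of `e^S_L`. -/
def web : {S : List Bool} → {J : List St} → Exec S J → List St → K
  | _, _, .nil, L => if L = [] then 1 else 0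
  | _, _, .hstep A _ _ _ s1 _ _ _ _ _ _ _ _ e, L =>
      match L.drop A.length with
      | a :: b :: R =>
          ∑ c : St, ∑ d : St,
            (if s1 then HCpm a b c d else HCmp a b c d) *
              web e (L.take A.length ++ c :: d :: R)
      | _ => 0
  | _, _, .ustep A _ _ _ s1 _ _ _ e, L =>
      match L.drop A.length with
      | a :: b :: R => (if s1 then bCpm a b else bCmp a b) * web e (L.take A.length ++ R)
      | _ => 0
  | _, _, .ystep A _ _ _ s _ _ _ _ _ e, L =>
      match L.drop A.length with
      | a :: b :: R =>
          ∑ c : St, (if s then tYpp a b c else tYmm a b c) * web e (L.take A.length ++ c :: R)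
      | _ => 0

/-- `c ∈ v⁻¹ ℤ[v⁻¹]`: a polynomial in `v⁻¹` with zero constant term. -/
def ZeroConst (c : K) : Prop :=
  ∃ p : Polynomial ℤ, p.coeff 0 = 0 ∧ c = Polynomial.aeval v⁻¹ p

/-- `x` has the negative-exponent property relative to a state string `J`
(`n` is the length of the ambient sign string). -/
def NegExpProp (n : ℕ) (x : List St → K) (J : List St) : Prop :=
  x J = 1 ∧ ∀ J' : List St, J'.length = n → J' ≠ J → ZeroConst (x J')

/-- `c ∈ ℕ[v, v⁻¹]`: a Laurent polynomial with nonnegative integer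
coefficients. -/
def IsNatLaurent (c : K) : Prop :=
  ∃ (p : Polynomial ℕ) (m : ℕ), c = v⁻¹ ^ m * Polynomial.aeval v p

/-- `c ∈ ℤ[v⁻¹]`. -/
def InZInv (c : K) : Prop := ∃ p : Polynomial ℤ, c = Polynomial.aeval v⁻¹ p

/-- Property P: all coefficients lie in `ℤ[v⁻¹]` and at most one of them has a
nonzero constant term. -/
def PropP (n : ℕ) (x : List St → K) : Prop :=
  (∀ J : List St, J.length = n → InZInv (x J)) ∧
  ∀ J1 J2 : List St, J1.length = n → J2.length = n →
    ¬ ZeroConst (x J1) → ¬ ZeroConst (x J2) → J1 = J2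

/-- The sign string `(+,+,−,−,+,+,−,−,+,+,−,−)`. -/
def base : List Bool :=
  [true, true, false, false, true, true, false, false, true, true, false, false]


open Matrix in
/-- The matrix acting on the `i`-th tensor factor: `X` on `W⁺ = ℂ³` and
`-Xᵀ` on the dual `W⁻`. -/
def coefM (S : List Bool) (X : Matrix (Fin 3) (Fin 3) ℂ) (i : Fin S.length) :
    Matrix (Fin 3) (Fin 3) ℂ :=
  if S.get i then X else -Xᵀ

/-- The action of a matrix `X` on `W^S = W^{s₁} ⊗ ⋯ ⊗ W^{s_n}`, in
coordinates with respect to the standard tensor-product basis. -/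
def actL (S : List Bool) (X : Matrix (Fin 3) (Fin 3) ℂ) :
    ((Fin S.length → Fin 3) → ℂ) →ₗ[ℂ] ((Fin S.length → Fin 3) → ℂ) where
  toFun x h := ∑ i : Fin S.length, ∑ b : Fin 3,
    coefM S X i (h i) b * x (Function.update h i b)
  map_add' x y := by
    funext h
    simp [mul_add, Finset.sum_add_distrib]
  map_smul' c x := by
    funext h
    simp only [Pi.smul_apply, smul_eq_mul, RingHom.id_apply, Finset.mul_sum]
    exact Finset.sum_congr rfl fun i _ => Finset.sum_congr rfl fun b _ => by ring

/-- The space of `𝔰𝔩₃(ℂ)`-invariants in `W^S`. -/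
def invSub (S : List Bool) : Submodule ℂ ((Fin S.length → Fin 3) → ℂ) :=
  ⨅ X ∈ {X : Matrix (Fin 3) (Fin 3) ℂ | Matrix.trace X = 0}, LinearMap.ker (actL S X)

/-! ### Highest weight vectors for the Chevalley relations of `𝔰𝔩₃` -/

/-- Operators on `V` satisfying the Chevalley relations of `𝔰𝔩₃`, except that the Serre relations
for `f₁, f₂` and `[h₁, h₂] = 0`, which play no role, are not recorded. The relations are stated on
vectors, so that they rewrite raising operators past lowering ones. -/
structure Chev (V : Type*) [AddCommGroup V] [Module ℂ V] where
  (e1 e2 f1 f2 h1 h2 : V →ₗ[ℂ] V)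
  e1_f1 : ∀ x, e1 (f1 x) = f1 (e1 x) + h1 x
  e2_f2 : ∀ x, e2 (f2 x) = f2 (e2 x) + h2 x
  e1_f2 : ∀ x, e1 (f2 x) = f2 (e1 x)
  e2_f1 : ∀ x, e2 (f1 x) = f1 (e2 x)
  h1_e1 : ∀ x, h1 (e1 x) = e1 (h1 x) + (2 : ℂ) • e1 x
  h1_e2 : ∀ x, h1 (e2 x) = e2 (h1 x) - e2 x
  h2_e1 : ∀ x, h2 (e1 x) = e1 (h2 x) - e1 x
  h2_e2 : ∀ x, h2 (e2 x) = e2 (h2 x) + (2 : ℂ) • e2 x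
  h1_f1 : ∀ x, h1 (f1 x) = f1 (h1 x) - (2 : ℂ) • f1 x
  h1_f2 : ∀ x, h1 (f2 x) = f2 (h1 x) + f2 x
  h2_f1 : ∀ x, h2 (f1 x) = f1 (h2 x) + f1 x
  h2_f2 : ∀ x, h2 (f2 x) = f2 (h2 x) - (2 : ℂ) • f2 x
  serre1 : ∀ x, e1 (e1 (e2 x)) - (2 : ℂ) • e1 (e2 (e1 x)) + e2 (e1 (e1 x)) = 0
  serre2 : ∀ x, e2 (e2 (e1 x)) - (2 : ℂ) • e2 (e1 (e2 x)) + e1 (e2 (e2 x)) = 0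

namespace Chev
variable {V : Type*} [AddCommGroup V] [Module ℂ V]

/-- The diagram automorphism: the two simple roots are exchanged. -/
def swap (c : Chev V) : Chev V where
  e1 := c.e2
  e2 := c.e1
  f1 := c.f2
  f2 := c.f1
  h1 := c.h2
  h2 := c.h1
  e1_f1 := c.e2_f2
  e2_f2 := c.e1_f1
  e1_f2 := c.e2_f1
  e2_f1 := c.e1_f2
  h1_e1 := c.h2_e2
  h1_e2 := c.h2_e1
  h2_e1 := c.h1_e2
  h2_e2 := c.h1_e1
  h1_f1 := c.h2_f2
  h1_f2 := c.h2_f1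
  h2_f1 := c.h1_f2
  h2_f2 := c.h1_f1
  serre1 := c.serre2
  serre2 := c.serre1

/-- The space of highest weight vectors of weight `(a, b)`. -/
def hw (c : Chev V) (a b : ℂ) : Submodule ℂ V where
  carrier := {x | c.e1 x = 0 ∧ c.e2 x = 0 ∧ c.h1 x = a • x ∧ c.h2 x = b • x}
  zero_mem' := by simp
  add_mem' := by
    rintro x y ⟨h1, h2, h3, h4⟩ ⟨k1, k2, k3, k4⟩
    simp [h1, h2, h3, h4, k1, k2, k3, k4]
  smul_mem' := by
    rintro t x ⟨h1, h2, h3, h4⟩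
    simp [h1, h2, h3, h4, smul_comm t]

/-- Vectors of weight `(a, b)` with `e₁² x = 0` and `e₂ x = 0`. For `(a - 1, b)` in place of
`(a, b)`, these are the leading components of the highest weight vectors of weight `(a, b)` in the
tensor product with a fundamental representation. -/
def pieri (c : Chev V) (a b : ℂ) : Submodule ℂ V where
  carrier := {x | c.e1 (c.e1 x) = 0 ∧ c.e2 x = 0 ∧ c.h1 x = a • x ∧ c.h2 x = b • x}
  zero_mem' := by simp
  add_mem' := by
    rintro x y ⟨h1, h2, h3, h4⟩ ⟨k1, k2, k3, k4⟩
    simp [h1, h2, h3, h4, k1, k2, k3, k4]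
  smul_mem' := by
    rintro t x ⟨h1, h2, h3, h4⟩
    simp [h1, h2, h3, h4, smul_comm t]

theorem hw_swap (c : Chev V) (a b : ℂ) : c.swap.hw b a = c.hw a b := by
  ext x
  simp only [hw, swap, Submodule.mem_mk, AddSubmonoid.mem_mk, AddSubsemigroup.mem_mk,
    Set.mem_ofPred_eq]
  tauto

/-- The operator `(b + 2) f₁ f₂ - (b + 1) f₂ f₁`. The coefficients are chosen so that `e₂`
annihilates its value on a highest weight vector of weight `(a, b + 1)`. -/
def lower (c : Chev V) (b : ℂ) : V →ₗ[ℂ] V :=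
  (b + 2) • (c.f1 ∘ₗ c.f2) - (b + 1) • (c.f2 ∘ₗ c.f1)

theorem lower_spec (c : Chev V) {a b : ℂ} {t : V} (ht : t ∈ c.hw a (b + 1)) :
    c.e1 (c.lower b t) = (a + b + 2) • c.f2 t ∧ c.e2 (c.lower b t) = 0 ∧
    c.h1 (c.lower b t) = (a - 1) • c.lower b t ∧
    c.h2 (c.lower b t) = b • c.lower b t := by
  obtain ⟨t1, t2, t3, t4⟩ := ht
  refine ⟨?_, ?_, ?_, ?_⟩ <;>
  simp only [lower, LinearMap.sub_apply, LinearMap.smul_apply, LinearMap.comp_apply, map_sub,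
    map_add, map_smul, c.e1_f1, c.e2_f2, c.e1_f2, c.e2_f1, c.h1_f1, c.h1_f2, c.h2_f1, c.h2_f2,
    t1, t2, t3, t4, map_zero] <;> module

theorem e2_f2_hw (c : Chev V) {a b : ℂ} {t : V} (ht : t ∈ c.hw a b) :
    c.e2 (c.f2 t) = b • t ∧ c.e1 (c.f2 t) = 0 := by
  obtain ⟨t1, t2, t3, t4⟩ := ht
  simp [c.e2_f2, c.e1_f2, t1, t2, t4]

theorem f1_spec (c : Chev V) {a b : ℂ} {w : V} (hw : w ∈ c.hw (a + 1) (b - 1)) :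
    c.e1 (c.f1 w) = (a + 1) • w ∧ c.e2 (c.f1 w) = 0 ∧
    c.h1 (c.f1 w) = (a - 1) • c.f1 w ∧ c.h2 (c.f1 w) = b • c.f1 w := by
  obtain ⟨t1, t2, t3, t4⟩ := hw
  refine ⟨?_, ?_, ?_, ?_⟩ <;>
  simp only [c.e1_f1, c.e2_f1, c.h1_f1, c.h2_f1, t1, t2, t3, t4, map_zero, map_smul] <;> module

theorem e1_assemble (c : Chev V) {a b : ℂ} {u w t : V} (hu : u ∈ c.hw (a - 1) b)
    (hw : w ∈ c.hw (a + 1) (b - 1)) (ht : t ∈ c.hw a (b + 1)) :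
    c.e1 (u + (c.f1 w + c.lower b t)) = (a + 1) • w + (a + b + 2) • c.f2 t := by
  rw [map_add, map_add, hu.1, (c.f1_spec hw).1, (c.lower_spec ht).1, zero_add]

theorem e2_e1_assemble (c : Chev V) {a b : ℂ} {u w t : V} (hu : u ∈ c.hw (a - 1) b)
    (hw : w ∈ c.hw (a + 1) (b - 1)) (ht : t ∈ c.hw a (b + 1)) :
    c.e2 (c.e1 (u + (c.f1 w + c.lower b t))) = ((a + b + 2) * (b + 1)) • t := by
  rw [c.e1_assemble hu hw ht, map_add, map_smul, map_smul, hw.2.1, (c.e2_f2_hw ht).1]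
  module

/-- The map `(u, w, t) ↦ u + f₁ w + lower b t` from the sum of three highest weight spaces to
`pieri (a - 1) b`. -/
def assemble (c : Chev V) (a b : ℂ) :
    (c.hw (a - 1) b × c.hw (a + 1) (b - 1) × c.hw a (b + 1)) →ₗ[ℂ] c.pieri (a - 1) b :=
  LinearMap.codRestrict _
    (LinearMap.coprod (c.hw (a - 1) b).subtype (LinearMap.coprod
      (c.f1 ∘ₗ (c.hw (a + 1) (b - 1)).subtype) (c.lower b ∘ₗ (c.hw a (b + 1)).subtype)))
    (by
      rintro ⟨⟨u, hu⟩, ⟨w, hw⟩, ⟨t, ht⟩⟩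
      obtain ⟨p1, p2, p3, p4⟩ := c.f1_spec hw
      obtain ⟨q1, q2, q3, q4⟩ := c.lower_spec ht
      refine ⟨?_, ?_, ?_, ?_⟩
      · change c.e1 (c.e1 (u + (c.f1 w + c.lower b t))) = 0
        rw [c.e1_assemble hu hw ht, map_add, map_smul, map_smul, hw.1, (c.e2_f2_hw ht).2]
        simp
      · simp [hu.2.1, p2, q2]
      · simp [hu.2.2.1, p3, q3]
      · simp [hu.2.2.2, p4, q4])

theorem assemble_apply (c : Chev V) (a b : ℂ) (u : c.hw (a - 1) b) (w : c.hw (a + 1) (b - 1))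
    (t : c.hw a (b + 1)) :
    (c.assemble a b (u, w, t) : V) = u + (c.f1 w + c.lower b t) := rfl

/-- The components of a vector `m` in the image are recovered from the top down: `t` from
`e₂ e₁ m = (a + b + 2)(b + 1) t`, then `w` from `e₁ m`, then `u`. -/
theorem assemble_bijective (c : Chev V) {a b : ℂ} (ha : a + 1 ≠ 0) (hb : b + 1 ≠ 0)
    (hab : a + b + 2 ≠ 0) : Function.Bijective (c.assemble a b) := by
  constructor
  · rw [← LinearMap.ker_eq_bot, LinearMap.ker_eq_bot']
    rintro ⟨⟨u, hu⟩, ⟨w, hw⟩, ⟨t, ht⟩⟩ h0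
    have h : u + (c.f1 w + c.lower b t) = 0 := congrArg Subtype.val h0
    have ht0 : t = 0 := by
      have := c.e2_e1_assemble hu hw ht
      rw [h, map_zero, map_zero, eq_comm, smul_eq_zero] at this
      exact this.resolve_left (mul_ne_zero hab hb)
    have hw0 : w = 0 := by
      have := c.e1_assemble hu hw ht
      rw [h, ht0, map_zero, map_zero, smul_zero, add_zero, eq_comm, smul_eq_zero] at this
      exact this.resolve_left ha
    subst ht0 hw0
    simp only [map_zero, add_zero] at h
    subst h
    rfl
  · rintro ⟨m, m1, m2, m3, m4⟩
    set k : ℂ := (a + b + 2) * (b + 1) with hk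
    have hk0 : k ≠ 0 := mul_ne_zero hab hb
    have ht : k⁻¹ • c.e2 (c.e1 m) ∈ c.hw a (b + 1) := by
      apply Submodule.smul_mem
      have s1 := c.serre1 m
      have s2 := c.serre2 m
      simp only [m1, m2, map_zero] at s1 s2
      refine ⟨by simpa using s1, by simpa using s2, ?_, ?_⟩ <;>
      simp only [c.h1_e1, c.h1_e2, c.h2_e1, c.h2_e2, map_add, map_sub, map_smul, m3, m4] <;> module
    set t := k⁻¹ • c.e2 (c.e1 m) with htd
    have hkt : k • t = c.e2 (c.e1 m) := by rw [htd, smul_inv_smul₀ hk0]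
    obtain ⟨q1, q2, q3, q4⟩ := c.lower_spec ht
    obtain ⟨r1, r2⟩ := c.e2_f2_hw ht
    have hw : (a + 1)⁻¹ • (c.e1 (m - c.lower b t)) ∈ c.hw (a + 1) (b - 1) := by
      apply Submodule.smul_mem
      refine ⟨?_, ?_, ?_, ?_⟩
      · rw [map_sub, map_sub, m1, q1, map_smul, r2]; simp
      · rw [map_sub, map_sub, q1, map_smul, r1, ← hkt]; module
      · rw [c.h1_e1, map_sub, m3, q3, ← smul_sub, map_smul]; module
      · rw [c.h2_e1, map_sub, m4, q4, ← smul_sub, map_smul]; module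
    set w := (a + 1)⁻¹ • (c.e1 (m - c.lower b t)) with hwd
    have haw : (a + 1) • w = c.e1 (m - c.lower b t) := by rw [hwd, smul_inv_smul₀ ha]
    obtain ⟨p1, p2, p3, p4⟩ := c.f1_spec hw
    have hu : m - c.lower b t - c.f1 w ∈ c.hw (a - 1) b := by
      refine ⟨?_, ?_, ?_, ?_⟩
      · rw [map_sub, p1, haw, sub_self]
      · rw [map_sub, map_sub, m2, p2, q2]; simp
      · rw [map_sub, map_sub, m3, p3, q3]; module
      · rw [map_sub, map_sub, m4, p4, q4]; module
    refine ⟨(⟨_, hu⟩, ⟨w, hw⟩, ⟨t, ht⟩), Subtype.ext ?_⟩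
    rw [assemble_apply]
    simp only
    abel

theorem finrank_pieri [FiniteDimensional ℂ V] (c : Chev V) {a b : ℂ} (ha : a + 1 ≠ 0)
    (hb : b + 1 ≠ 0) (hab : a + b + 2 ≠ 0) :
    Module.finrank ℂ (c.pieri (a - 1) b) = Module.finrank ℂ (c.hw (a - 1) b) +
      (Module.finrank ℂ (c.hw (a + 1) (b - 1)) + Module.finrank ℂ (c.hw a (b + 1))) := by
  rw [← (LinearEquiv.ofBijective _ (c.assemble_bijective ha hb hab)).finrank_eq,
    Module.finrank_prod, Module.finrank_prod]

/-- The `h₁`-eigenvalue of a nonzero vector killed by `e₁` is a natural number. -/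
theorem primitive_nat [FiniteDimensional ℂ V] (c : Chev V) {x : V} {μ : ℂ} (hx : x ≠ 0)
    (he : c.e1 x = 0) (hh : c.h1 x = μ • x) : ∃ n : ℕ, μ = n := by
  by_cases hh0 : c.h1 = 0
  · refine ⟨0, ?_⟩
    rw [hh0, LinearMap.zero_apply, eq_comm, smul_eq_zero] at hh
    simpa using hh.resolve_right hx
  let : LieRing (Module.End ℂ V) := LieRing.ofAssociativeRing
  let h : Module.End ℂ V := c.h1
  let e : Module.End ℂ V := c.e1
  let f : Module.End ℂ V := c.f1
  have ht : IsSl2Triple h e f := by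
    refine ⟨hh0, ?_, ?_, ?_⟩
    · ext y; simp [h, e, f, Ring.lie_def, c.e1_f1]
    · ext y; simp [h, e, Ring.lie_def, c.h1_e1, two_smul]
    · ext y; simp [h, f, Ring.lie_def, c.h1_f1, two_smul]
  have P : ht.HasPrimitiveVectorWith x μ := ⟨hx, hh, he⟩
  exact P.exists_nat

/-- By symmetry (`hw_swap`) the same holds when `b < 0`. -/
theorem hw_eq_bot [FiniteDimensional ℂ V] (c : Chev V) {a b : ℤ} (h : a < 0) :
    c.hw a b = ⊥ := by
  rw [eq_bot_iff]
  rintro x ⟨h1, h2, h3, h4⟩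
  by_contra hx
  obtain ⟨n, hn⟩ := c.primitive_nat hx h1 h3
  have : a = n := by exact_mod_cast hn
  omega

/-- If `f₁ x` were nonzero, it would be a primitive vector of weight `-2` for `𝔰𝔩₂`. -/
theorem f1_eq_zero [FiniteDimensional ℂ V] (c : Chev V) {x : V} (hx : x ∈ c.hw 0 0) :
    c.f1 x = 0 := by
  obtain ⟨h1, h2, h3, h4⟩ := hx
  by_contra hf
  obtain ⟨n, hn⟩ := c.primitive_nat (μ := ((-2 : ℤ) : ℂ)) hf
    (by simp [c.e1_f1, h1, h3]) (by rw [c.h1_f1, h3]; simp)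
  have : (-2 : ℤ) = n := by exact_mod_cast hn
  omega
end Chev

/-! ### The tensor product as an `𝔰𝔩₃`-module -/

/-- The coordinate space of `W^S`. -/
abbrev Ten (S : List Bool) : Type := (Fin S.length → Fin 3) → ℂ

open Matrix in
/-- The action of `X` on a single factor `W⁺` (`true`) or `W⁻` (`false`). -/
def sgnM (s : Bool) (X : Matrix (Fin 3) (Fin 3) ℂ) : Matrix (Fin 3) (Fin 3) ℂ :=
  if s then X else -Xᵀ

/-- The component of a tensor in `W^s ⊗ W^S` along the `i`-th basis vector of `W^s`, an element of
`W^S`. -/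
def slice (s : Bool) (S : List Bool) (i : Fin 3) : Ten (s :: S) →ₗ[ℂ] Ten S where
  toFun x g := x (Fin.cons (n := S.length) (α := fun _ => Fin 3) i g)
  map_add' _ _ := rfl
  map_smul' _ _ := rfl

/-- The tensor in `W^s ⊗ W^S` with prescribed components. -/
def glue (s : Bool) (S : List Bool) (y : Fin 3 → Ten S) : Ten (s :: S) :=
  fun h => y (h 0) (Fin.tail (n := S.length) (α := fun _ => Fin 3) h)

theorem slice_ext {s : Bool} {S : List Bool} {x y : Ten (s :: S)}
    (h : ∀ i, slice s S i x = slice s S i y) : x = y := by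
  funext g
  have := congrFun (h (g 0)) (Fin.tail (n := S.length) (α := fun _ => Fin 3) g)
  change x (Fin.cons (n := S.length) (α := fun _ => Fin 3) (g 0) (Fin.tail g)) =
    y (Fin.cons (n := S.length) (α := fun _ => Fin 3) (g 0) (Fin.tail g)) at this
  rwa [Fin.cons_self_tail] at this

/-- The Leibniz rule: `X` acts on `W^s ⊗ W^S` through the first factor plus through the rest. -/
theorem slice_act (s : Bool) (S : List Bool) (X : Matrix (Fin 3) (Fin 3) ℂ) (x : Ten (s :: S))
    (i : Fin 3) : slice s S i (actL (s :: S) X x) =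
      ∑ b, sgnM s X i b • slice s S b x + actL S X (slice s S i x) := by
  funext g
  change ∑ k : Fin (S.length + 1), ∑ b : Fin 3, coefM (s :: S) X k
      (Fin.cons (n := S.length) (α := fun _ => Fin 3) i g k) b *
        x (Function.update (Fin.cons (n := S.length) (α := fun _ => Fin 3) i g) k b) = _
  rw [Fin.sum_univ_succ]
  simp only [Fin.cons_zero, Fin.cons_succ, Fin.update_cons_zero, ← Fin.cons_update]
  simp [Pi.add_apply, Finset.sum_apply, slice, actL, coefM, sgnM]
  rfl

theorem sgnM_add (s : Bool) (X Y : Matrix (Fin 3) (Fin 3) ℂ) :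
    sgnM s (X + Y) = sgnM s X + sgnM s Y := by
  cases s <;> simp [sgnM, add_comm]

theorem sgnM_smul (s : Bool) (t : ℂ) (X : Matrix (Fin 3) (Fin 3) ℂ) :
    sgnM s (t • X) = t • sgnM s X := by
  cases s <;> simp [sgnM]

theorem sgnM_lie (s : Bool) (X Y : Matrix (Fin 3) (Fin 3) ℂ) :
    sgnM s (X * Y - Y * X) = sgnM s X * sgnM s Y - sgnM s Y * sgnM s X := by
  cases s <;> simp [sgnM]

theorem actL_nil (X : Matrix (Fin 3) (Fin 3) ℂ) (x : Ten []) : actL [] X x = 0 := by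
  funext g
  simp only [actL, LinearMap.coe_mk, AddHom.coe_mk]
  exact Fin.sum_univ_zero _

theorem actL_add (S : List Bool) (X Y : Matrix (Fin 3) (Fin 3) ℂ) (x : Ten S) :
    actL S (X + Y) x = actL S X x + actL S Y x := by
  induction S with
  | nil => simp only [actL_nil, add_zero]
  | cons s S ih =>
    refine slice_ext fun i => ?_
    simp only [map_add, slice_act, ih, sgnM_add, Matrix.add_apply, add_smul,
      Finset.sum_add_distrib]
    abel

theorem actL_smul (S : List Bool) (t : ℂ) (X : Matrix (Fin 3) (Fin 3) ℂ) (x : Ten S) :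
    actL S (t • X) x = t • actL S X x := by
  induction S with
  | nil => simp only [actL_nil, smul_zero]
  | cons s S ih =>
    refine slice_ext fun i => ?_
    simp only [map_smul, slice_act, ih, sgnM_smul, Matrix.smul_apply, smul_add, Finset.smul_sum,
      smul_assoc]

theorem actL_lie (S : List Bool) (X Y : Matrix (Fin 3) (Fin 3) ℂ) (x : Ten S) :
    actL S (X * Y - Y * X) x = actL S X (actL S Y x) - actL S Y (actL S X x) := by
  induction S with
  | nil => simp only [actL_nil, sub_zero]
  | cons s S ih =>
    refine slice_ext fun i => ?_
    simp only [map_sub, slice_act, ih, sgnM_lie, Matrix.sub_apply, Matrix.mul_apply, map_add,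
      map_smul, Fin.sum_univ_three]
    module

/-- `actL` as a linear function of the matrix. -/
def actM (S : List Bool) : Matrix (Fin 3) (Fin 3) ℂ →ₗ[ℂ] Module.End ℂ (Ten S) where
  toFun X := actL S X
  map_add' X Y := LinearMap.ext (actL_add S X Y)
  map_smul' t X := LinearMap.ext (actL_smul S t X)

/-- The matrix unit `E₂₁`. Because of the twist by the Chevalley involution, it plays the role of
the raising operator `e₁`; likewise `mE2`, and `mF1`, `mF2` are the lowering operators. -/
def mE1 : Matrix (Fin 3) (Fin 3) ℂ := !![0, 0, 0; 1, 0, 0; 0, 0, 0]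
def mE2 : Matrix (Fin 3) (Fin 3) ℂ := !![0, 0, 0; 0, 0, 0; 0, 1, 0]
def mF1 : Matrix (Fin 3) (Fin 3) ℂ := !![0, 1, 0; 0, 0, 0; 0, 0, 0]
def mF2 : Matrix (Fin 3) (Fin 3) ℂ := !![0, 0, 0; 0, 0, 1; 0, 0, 0]
/-- The commutator `[E₂₁, E₁₂]`, the negative of the usual coroot; likewise `mH2`. -/
def mH1 : Matrix (Fin 3) (Fin 3) ℂ := !![-1, 0, 0; 0, 1, 0; 0, 0, 0]
def mH2 : Matrix (Fin 3) (Fin 3) ℂ := !![0, 0, 0; 0, -1, 0; 0, 0, 1]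

theorem act_comm (S : List Bool) {X Y Z : Matrix (Fin 3) (Fin 3) ℂ} (h : X * Y - Y * X = Z)
    (x : Ten S) : actM S X (actM S Y x) = actM S Y (actM S X x) + actM S Z x := by
  have := actL_lie S X Y x
  rw [h] at this
  change actL S X (actL S Y x) = actL S Y (actL S X x) + actL S Z x
  rw [this]
  abel

/-- `W^S` as a module for the Chevalley generators, twisted by the Chevalley involution. -/
def chevOf (S : List Bool) : Chev (Ten S) where
  e1 := actM S mE1
  e2 := actM S mE2
  f1 := actM S mF1
  f2 := actM S mF2
  h1 := actM S mH1
  h2 := actM S mH2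
  e1_f1 := act_comm S (by ext i j; fin_cases i <;> fin_cases j <;> norm_num [mE1, mF1, mH1])
  e2_f2 := act_comm S (by ext i j; fin_cases i <;> fin_cases j <;> norm_num [mE2, mF2, mH2])
  e1_f2 x := by
    simpa using act_comm S (X := mE1) (Y := mF2) (Z := 0)
      (by ext i j; fin_cases i <;> fin_cases j <;> norm_num [mE1, mF2]) x
  e2_f1 x := by
    simpa using act_comm S (X := mE2) (Y := mF1) (Z := 0)
      (by ext i j; fin_cases i <;> fin_cases j <;> norm_num [mE2, mF1]) x
  h1_e1 x := by
    simpa using act_comm S (X := mH1) (Y := mE1) (Z := (2 : ℂ) • mE1)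
      (by ext i j; fin_cases i <;> fin_cases j <;> norm_num [mH1, mE1]) x
  h1_e2 x := by
    simpa [sub_eq_add_neg] using act_comm S (X := mH1) (Y := mE2) (Z := -mE2)
      (by ext i j; fin_cases i <;> fin_cases j <;> norm_num [mH1, mE2]) x
  h2_e1 x := by
    simpa [sub_eq_add_neg] using act_comm S (X := mH2) (Y := mE1) (Z := -mE1)
      (by ext i j; fin_cases i <;> fin_cases j <;> norm_num [mH2, mE1]) x
  h2_e2 x := by
    simpa using act_comm S (X := mH2) (Y := mE2) (Z := (2 : ℂ) • mE2)
      (by ext i j; fin_cases i <;> fin_cases j <;> norm_num [mH2, mE2]) x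
  h1_f1 x := by
    simpa [sub_eq_add_neg] using act_comm S (X := mH1) (Y := mF1) (Z := -((2 : ℂ) • mF1))
      (by ext i j; fin_cases i <;> fin_cases j <;> norm_num [mH1, mF1]) x
  h1_f2 x := act_comm S (by ext i j; fin_cases i <;> fin_cases j <;> norm_num [mH1, mF2]) x
  h2_f1 x := act_comm S (by ext i j; fin_cases i <;> fin_cases j <;> norm_num [mH2, mF1]) x
  h2_f2 x := by
    simpa [sub_eq_add_neg] using act_comm S (X := mH2) (Y := mF2) (Z := -((2 : ℂ) • mF2))
      (by ext i j; fin_cases i <;> fin_cases j <;> norm_num [mH2, mF2]) x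
  serre1 x := by
    have h (y : Ten S) := act_comm S (X := mE1) (Y := mE2) rfl y
    have h' := act_comm S (X := mE1) (Y := mE1 * mE2 - mE2 * mE1) (Z := 0)
      (by ext i j; fin_cases i <;> fin_cases j <;> norm_num [mE1, mE2]) x
    rw [map_zero, LinearMap.zero_apply, add_zero, ← sub_eq_iff_eq_add'.2 (h x),
      ← sub_eq_iff_eq_add'.2 (h _), map_sub] at h'
    rw [two_smul]
    linear_combination h'
  serre2 x := by
    have h (y : Ten S) := act_comm S (X := mE2) (Y := mE1) rfl y
    have h' := act_comm S (X := mE2) (Y := mE2 * mE1 - mE1 * mE2) (Z := 0)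
      (by ext i j; fin_cases i <;> fin_cases j <;> norm_num [mE1, mE2]) x
    rw [map_zero, LinearMap.zero_apply, add_zero, ← sub_eq_iff_eq_add'.2 (h x),
      ← sub_eq_iff_eq_add'.2 (h _), map_sub] at h'
    rw [two_smul]
    linear_combination h'

theorem invSub_eq_hw (S : List Bool) : invSub S = (chevOf S).hw 0 0 := by
  ext x
  simp only [invSub, Submodule.mem_iInf, LinearMap.mem_ker]
  constructor
  · intro h
    refine ⟨h mE1 ?_, h mE2 ?_, ?_, ?_⟩
    · simp [mE1, Matrix.trace, Fin.sum_univ_three]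
    · simp [mE2, Matrix.trace, Fin.sum_univ_three]
    · rw [zero_smul]
      exact h mH1 (by simp [mH1, Matrix.trace, Fin.sum_univ_three])
    · rw [zero_smul]
      exact h mH2 (by simp [mH2, Matrix.trace, Fin.sum_univ_three])
  · intro hx X hX
    have hf1 : actM S mF1 x = 0 := (chevOf S).f1_eq_zero hx
    have hf2 : actM S mF2 x = 0 :=
      (chevOf S).swap.f1_eq_zero (by rw [Chev.hw_swap]; exact hx)
    obtain ⟨he1, he2, hh1, hh2⟩ := hx
    change actM S mE1 x = 0 at he1
    change actM S mE2 x = 0 at he2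
    change actM S mH1 x = _ at hh1
    change actM S mH2 x = _ at hh2
    rw [zero_smul] at hh1 hh2
    have hE : actM S (mE2 * mE1 - mE1 * mE2) x = 0 := by
      change actL S _ x = 0
      rw [actL_lie]
      change actM S _ (actM S _ x) - actM S _ (actM S _ x) = 0
      simp [he1, he2]
    have hF : actM S (mF1 * mF2 - mF2 * mF1) x = 0 := by
      change actL S _ x = 0
      rw [actL_lie]
      change actM S _ (actM S _ x) - actM S _ (actM S _ x) = 0
      simp [hf1, hf2]
    have hX' : X 2 2 = - X 0 0 - X 1 1 := by
      have : X 0 0 + X 1 1 + X 2 2 = 0 := by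
        simpa [Matrix.trace, Fin.sum_univ_three] using hX
      linear_combination this
    have key : X = X 1 0 • mE1 + X 2 1 • mE2 + X 0 1 • mF1 + X 1 2 • mF2
        + (-X 0 0) • mH1 + (-X 0 0 - X 1 1) • mH2
        + X 2 0 • (mE2 * mE1 - mE1 * mE2) + X 0 2 • (mF1 * mF2 - mF2 * mF1) := by
      ext i j
      fin_cases i <;> fin_cases j <;> simp [mE1, mE2, mF1, mF2, mH1, mH2, hX']
    change actM S X x = 0
    rw [key]
    simp only [map_add, map_smul, LinearMap.add_apply, LinearMap.smul_apply, he1, he2, hf1, hf2,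
      hh1, hh2, hE, hF, smul_zero, add_zero]

/-! ### Splitting off the first tensor factor -/

/-- The conditions on the components `p, q, r` of a vector of `W ⊗ V`, with `W` a fundamental
representation, to be a highest weight vector of weight `(a, b)`: `q` and `r` are determined by `p`,
and the conditions on `q` and `r` reduce to those on `p` by the Serre relations. The sign `σ` is
`1` for `W⁻` and `-1` for `W⁺`. -/
theorem Chev.tensor_iff {V : Type*} [AddCommGroup V] [Module ℂ V] (c : Chev V) {σ : ℂ}
    (hσ : σ * σ = 1) (a b : ℂ) (p q r : V) :
    ((-(σ • q) + c.e1 p = 0 ∧ c.e1 q = 0 ∧ c.e1 r = 0) ∧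
      (c.e2 p = 0 ∧ -(σ • r) + c.e2 q = 0 ∧ c.e2 r = 0) ∧
      (p + c.h1 p = a • p ∧ -q + c.h1 q = a • q ∧ c.h1 r = a • r) ∧
      (c.h2 p = b • p ∧ q + c.h2 q = b • q ∧ -r + c.h2 r = b • r)) ↔
    p ∈ c.pieri (a - 1) b ∧ q = σ • c.e1 p ∧ r = σ • c.e2 q := by
  constructor
  · rintro ⟨⟨h1, h2, h3⟩, ⟨h4, h5, h6⟩, ⟨h7, h8, h9⟩, h10, h11, h12⟩
    rw [neg_add_eq_zero] at h1 h5
    refine ⟨⟨?_, h4, ?_, h10⟩, ?_, ?_⟩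
    · rw [← h1, map_smul, h2, smul_zero]
    · rw [sub_smul, ← h7]
      module
    · rw [← h1, smul_smul, hσ, one_smul]
    · rw [← h5, smul_smul, hσ, one_smul]
  · rintro ⟨⟨h1, h2, h3, h4⟩, rfl, rfl⟩
    have s1 := c.serre1 p
    have s2 := c.serre2 p
    simp only [h1, h2, map_zero] at s1 s2
    have s1' : c.e1 (c.e2 (c.e1 p)) = 0 := by simpa using s1
    have s2' : c.e2 (c.e2 (c.e1 p)) = 0 := by simpa using s2
    refine ⟨⟨?_, ?_, ?_⟩, ⟨h2, ?_, ?_⟩, ⟨?_, ?_, ?_⟩, h4, ?_, ?_⟩ <;>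
    simp only [map_smul, c.h1_e1, c.h1_e2, c.h2_e1, c.h2_e2, h1, h3, h4, s1', s2', smul_zero,
      smul_smul, hσ, map_add, map_sub] <;> module

theorem slice_ext_iff {s : Bool} {S : List Bool} {x y : Ten (s :: S)} :
    x = y ↔ slice s S 0 x = slice s S 0 y ∧ slice s S 1 x = slice s S 1 y ∧
      slice s S 2 x = slice s S 2 y := by
  refine ⟨fun h => by simp [h], fun ⟨h0, h1, h2⟩ => slice_ext fun i => ?_⟩
  fin_cases i
  exacts [h0, h1, h2]

theorem mem_hw_cons {s : Bool} {S : List Bool} {a b : ℂ} {x : Ten (s :: S)} :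
    x ∈ (chevOf (s :: S)).hw a b ↔
      (∀ i, ∑ k, sgnM s mE1 i k • slice s S k x + (chevOf S).e1 (slice s S i x) = 0) ∧
      (∀ i, ∑ k, sgnM s mE2 i k • slice s S k x + (chevOf S).e2 (slice s S i x) = 0) ∧
      (∀ i, ∑ k, sgnM s mH1 i k • slice s S k x + (chevOf S).h1 (slice s S i x) =
        a • slice s S i x) ∧
      (∀ i, ∑ k, sgnM s mH2 i k • slice s S k x + (chevOf S).h2 (slice s S i x) =
        b • slice s S i x) := by
  have key (X : Matrix (Fin 3) (Fin 3) ℂ) (y : Ten (s :: S)) : actL (s :: S) X x = y ↔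
      ∀ i, ∑ k, sgnM s X i k • slice s S k x + actL S X (slice s S i x) = slice s S i y := by
    refine ⟨fun h i => by rw [← h, slice_act], fun h => slice_ext fun i => ?_⟩
    rw [slice_act, h]
  exact and_congr (key mE1 0) (and_congr (key mE2 0) (and_congr (key mH1 _) (key mH2 _)))

theorem mem_hw_true {S : List Bool} {a b : ℂ} {x : Ten (true :: S)} :
    x ∈ (chevOf (true :: S)).hw a b ↔
      slice true S 2 x ∈ (chevOf S).swap.pieri (b - 1) a ∧
      slice true S 1 x = (-1 : ℂ) • (chevOf S).e2 (slice true S 2 x) ∧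
      slice true S 0 x = (-1 : ℂ) • (chevOf S).e1 (slice true S 1 x) := by
  refine Iff.trans ?_ ((chevOf S).swap.tensor_iff (σ := -1) (by norm_num) b a _ _ _)
  rw [mem_hw_cons]
  simp only [Fin.forall_fin_succ, Fin.sum_univ_three]
  simp [sgnM, mE1, mE2, mH1, mH2, Chev.swap]
  tauto

theorem mem_hw_false {S : List Bool} {a b : ℂ} {x : Ten (false :: S)} :
    x ∈ (chevOf (false :: S)).hw a b ↔
      slice false S 0 x ∈ (chevOf S).pieri (a - 1) b ∧
      slice false S 1 x = (1 : ℂ) • (chevOf S).e1 (slice false S 0 x) ∧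
      slice false S 2 x = (1 : ℂ) • (chevOf S).e2 (slice false S 1 x) := by
  refine Iff.trans ?_ ((chevOf S).tensor_iff (σ := 1) (by norm_num) a b _ _ _)
  rw [mem_hw_cons]
  simp only [Fin.forall_fin_succ, Fin.sum_univ_three]
  simp [sgnM, mE1, mE2, mH1, mH2]

theorem finrank_hw_true (S : List Bool) (a b : ℂ) :
    Module.finrank ℂ ((chevOf (true :: S)).hw a b) =
      Module.finrank ℂ ((chevOf S).swap.pieri (b - 1) a) := by
  refine (LinearEquiv.ofBijective ((slice true S 2).restrict
    fun x hx => (mem_hw_true.1 hx).1) ⟨?_, ?_⟩).finrank_eq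
  · rintro ⟨x, hx⟩ ⟨y, hy⟩ h
    have h2 : slice true S 2 x = slice true S 2 y := congrArg Subtype.val h
    obtain ⟨-, x1, x0⟩ := mem_hw_true.1 hx
    obtain ⟨-, y1, y0⟩ := mem_hw_true.1 hy
    refine Subtype.ext (slice_ext_iff.2 ⟨?_, ?_, h2⟩)
    · rw [x0, y0, x1, y1, h2]
    · rw [x1, y1, h2]
  · rintro ⟨m, hm⟩
    let q := (-1 : ℂ) • (chevOf S).e2 m
    refine ⟨⟨glue true S ![(-1 : ℂ) • (chevOf S).e1 q, q, m], mem_hw_true.2 ?_⟩, rfl⟩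
    exact ⟨hm, rfl, rfl⟩

theorem finrank_hw_false (S : List Bool) (a b : ℂ) :
    Module.finrank ℂ ((chevOf (false :: S)).hw a b) =
      Module.finrank ℂ ((chevOf S).pieri (a - 1) b) := by
  refine (LinearEquiv.ofBijective ((slice false S 0).restrict
    fun x hx => (mem_hw_false.1 hx).1) ⟨?_, ?_⟩).finrank_eq
  · rintro ⟨x, hx⟩ ⟨y, hy⟩ h
    have h2 : slice false S 0 x = slice false S 0 y := congrArg Subtype.val h
    obtain ⟨-, x1, x0⟩ := mem_hw_false.1 hx
    obtain ⟨-, y1, y0⟩ := mem_hw_false.1 hy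
    refine Subtype.ext (slice_ext_iff.2 ⟨h2, ?_, ?_⟩)
    · rw [x1, y1, h2]
    · rw [x0, y0, x1, y1, h2]
  · rintro ⟨m, hm⟩
    let q := (1 : ℂ) • (chevOf S).e1 m
    refine ⟨⟨glue false S ![m, q, (1 : ℂ) • (chevOf S).e2 q], mem_hw_false.2 ?_⟩, rfl⟩
    exact ⟨hm, rfl, rfl⟩

/-- The dimension of the highest weight space of `W^S` of integral weight `p`. -/
def hdim (S : List Bool) (p : ℤ × ℤ) : ℕ :=
  Module.finrank ℂ ((chevOf S).hw (p.1 : ℂ) (p.2 : ℂ))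

theorem hdim_eq {S : List Bool} {p : ℤ × ℤ} {a b : ℂ} (ha : (p.1 : ℂ) = a) (hb : (p.2 : ℂ) = b) :
    hdim S p = Module.finrank ℂ ((chevOf S).hw a b) := by
  subst ha hb
  rfl

theorem hdim_eq_zero (S : List Bool) {p : ℤ × ℤ} (hp : ¬ (0 ≤ p.1 ∧ 0 ≤ p.2)) :
    hdim S p = 0 := by
  rw [not_and_or, not_le, not_le] at hp
  unfold hdim
  rcases hp with h | h
  · rw [(chevOf S).hw_eq_bot h, finrank_bot]
  · rw [← Chev.hw_swap, (chevOf S).swap.hw_eq_bot h, finrank_bot]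

/-- The Pieri rule for tensoring with a fundamental representation. -/
theorem hdim_cons (s : Bool) (S : List Bool) {p : ℤ × ℤ} (h1 : 0 ≤ p.1) (h2 : 0 ≤ p.2) :
    hdim (s :: S) p = ∑ j : St, hdim S (p + wt s j) := by
  obtain ⟨a, b⟩ := p
  simp only at h1 h2
  have ha : (a : ℂ) + 1 ≠ 0 := by
    have : a + 1 ≠ 0 := by omega
    exact_mod_cast this
  have hb : (b : ℂ) + 1 ≠ 0 := by
    have : b + 1 ≠ 0 := by omega
    exact_mod_cast this
  have hab : (a : ℂ) + b + 2 ≠ 0 := by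
    have : a + b + 2 ≠ 0 := by omega
    exact_mod_cast this
  have hsum (g : St → ℕ) : ∑ j : St, g j = g .neg + (g .zero + g .pos) := by
    change ∑ j ∈ {St.neg, St.zero, St.pos}, g j = _
    rw [Finset.sum_insert (by decide), Finset.sum_insert (by decide), Finset.sum_singleton]
  rw [hsum]
  cases s
  · rw [hdim_eq (p := (a, b)) rfl rfl, finrank_hw_false, (chevOf S).finrank_pieri ha hb hab]
    congr 1
    · exact (hdim_eq (by simp [wt, sub_eq_add_neg]) (by simp [wt])).symm
    congr 1 <;> exact (hdim_eq (by simp [wt]) (by simp [wt, sub_eq_add_neg])).symm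
  · rw [add_comm (a : ℂ)] at hab
    rw [hdim_eq (p := (a, b)) rfl rfl, finrank_hw_true, (chevOf S).swap.finrank_pieri hb ha hab,
      Chev.hw_swap, Chev.hw_swap, Chev.hw_swap]
    congr 1
    · exact (hdim_eq (by simp [wt]) (by simp [wt, sub_eq_add_neg])).symm
    congr 1 <;> exact (hdim_eq (by simp [wt, sub_eq_add_neg]) (by simp [wt])).symm

theorem hdim_nil (p : ℤ × ℤ) : hdim [] p = if p = 0 then 1 else 0 := by
  unfold hdim
  split_ifs with h
  · subst h
    have : (chevOf []).hw ((0 : ℤ × ℤ).1 : ℂ) ((0 : ℤ × ℤ).2 : ℂ) = ⊤ := by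
      rw [eq_top_iff]
      intro x _
      refine ⟨actL_nil _ x, actL_nil _ x, (actL_nil _ x).trans ?_, (actL_nil _ x).trans ?_⟩ <;>
      simp
    rw [this, finrank_top, Module.finrank_fintype_fun_eq_card]
    simp
  · have : (chevOf []).hw (p.1 : ℂ) (p.2 : ℂ) = ⊥ := by
      rw [eq_bot_iff]
      rintro x ⟨-, -, h1, h2⟩
      have k1 := h1.symm.trans (actL_nil _ x)
      have k2 := h2.symm.trans (actL_nil _ x)
      rw [smul_eq_zero] at k1 k2
      by_contra hx
      exact h (Prod.ext (by exact_mod_cast k1.resolve_right hx)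
        (by exact_mod_cast k2.resolve_right hx))
    rw [this, finrank_bot]

/-! ### Counting dominant paths -/

/-- Variant of `Dominant` for paths starting at `p` instead of the origin. -/
def DomFrom (p : ℤ × ℤ) (S : List Bool) (J : List St) : Prop :=
  J.length = S.length ∧
  (∀ k : ℕ, 0 ≤ (p + wtSum (S.take k) (J.take k)).1 ∧
    0 ≤ (p + wtSum (S.take k) (J.take k)).2) ∧
  p + wtSum S J = 0

theorem wtSum_cons (s : Bool) (S : List Bool) (j : St) (J : List St) :
    wtSum (s :: S) (j :: J) = wt s j + wtSum S J := by
  simp [wtSum]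

theorem domFrom_cons {p : ℤ × ℤ} (h1 : 0 ≤ p.1) (h2 : 0 ≤ p.2) (s : Bool) (S : List Bool) (j : St)
    (J : List St) : DomFrom p (s :: S) (j :: J) ↔ DomFrom (p + wt s j) S J := by
  unfold DomFrom
  rw [wtSum_cons, ← add_assoc]
  refine and_congr (by simp) (and_congr ⟨fun h k => ?_, fun h k => ?_⟩ Iff.rfl)
  · have := h (k + 1)
    rwa [List.take_succ_cons, List.take_succ_cons, wtSum_cons, ← add_assoc] at this
  · cases k with
    | zero => simpa [wtSum] using ⟨h1, h2⟩
    | succ k =>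
      rw [List.take_succ_cons, List.take_succ_cons, wtSum_cons, ← add_assoc]
      exact h k

theorem finite_domFrom (p : ℤ × ℤ) (S : List Bool) : Finite {J : List St // DomFrom p S J} :=
  (List.finite_length_eq St S.length).subset fun _ hJ => hJ.1

/-- Splitting a dominant path from `p` into its first step and a dominant path from `p + wt s j`. -/
def domFromEquiv {p : ℤ × ℤ} (h1 : 0 ≤ p.1) (h2 : 0 ≤ p.2) (s : Bool) (S : List Bool) :
    {J : List St // DomFrom p (s :: S) J} ≃
      Σ j : St, {J : List St // DomFrom (p + wt s j) S J} where
  toFun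
    | ⟨[], h⟩ => absurd h.1 (by simp)
    | ⟨j :: J, h⟩ => ⟨j, J, (domFrom_cons h1 h2 s S j J).1 h⟩
  invFun q := ⟨q.1 :: q.2.1, (domFrom_cons h1 h2 s S _ _).2 q.2.2⟩
  left_inv
    | ⟨[], h⟩ => absurd h.1 (by simp)
    | ⟨j :: J, h⟩ => rfl
  right_inv _ := rfl

theorem hdim_eq_card (S : List Bool) (p : ℤ × ℤ) :
    hdim S p = Nat.card {J : List St // DomFrom p S J} := by
  induction S generalizing p with
  | nil =>
    rw [hdim_nil]
    split_ifs with h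
    · subst h
      rw [eq_comm, Nat.card_eq_one_iff_unique]
      refine ⟨⟨fun x y => Subtype.ext ?_⟩, ⟨[], by simp [DomFrom, wtSum]⟩⟩
      rw [List.length_eq_zero_iff.1 x.2.1, List.length_eq_zero_iff.1 y.2.1]
    · have : IsEmpty {J : List St // DomFrom p [] J} :=
        ⟨fun x => h (by simpa [wtSum] using x.2.2.2)⟩
      rw [Nat.card_of_isEmpty]
  | cons s S ih =>
    by_cases hp : 0 ≤ p.1 ∧ 0 ≤ p.2
    · have (j : St) := finite_domFrom (p + wt s j) S
      rw [hdim_cons s S hp.1 hp.2, Nat.card_congr (domFromEquiv hp.1 hp.2 s S), Nat.card_sigma]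
      exact Finset.sum_congr rfl fun j _ => ih _
    · have : IsEmpty {J : List St // DomFrom p (s :: S) J} :=
        ⟨fun x => hp (by simpa [wtSum] using x.2.2.1 0)⟩
      rw [hdim_eq_zero _ hp, Nat.card_of_isEmpty]

/-- the dimension of the invariant space equals the number of
dominant state strings. -/
theorem finrank_inv_eq_card_dominant (S : List Bool) :
    Module.finrank ℂ (invSub S) = Nat.card {J : List St // Dominant S J} := by
  rw [invSub_eq_hw, ← hdim_eq (p := 0) Int.cast_zero Int.cast_zero, hdim_eq_card]
  simp only [DomFrom, Dominant, zero_add]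

end
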